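/- For n ≥ 1, let η denote the element -1 ∈ M_n. The quotient of the complex group algebra ℂ[M_n] by the two-sided ideal generated by the element η + 1 (the sum in ℂ[M_n] of the basis element corresponding to η ∈ M_n and the identity) is isomorphic, as a ℂ-algebra, to the Clifford algebra of ℂ^n with quadratic form q(z) = -(z₁² + z₂² + ⋯ + z_n²). -/

import Mathlib

/-!
`Cl_m` is the Clifford algebra of `Q_m(x) = -(x,x)` on `ℝ^m`, with generators
`e_1, …, e_m`.  `M_n` is the subgroup of the unit group of `Cl_{n+1}` generated by
the elements `e_i e_{i+1}` for `1 ≤ i ≤ n`, and `η = -1 ∈ M_n`.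

Theorem: for `n ≥ 1`, the quotient of the complex group algebra `ℂ[M_n]` by the
two-sided ideal generated by `η + 1` (formalized as the `RingQuot` of the relation
identifying `η + 1` with `0`) is isomorphic as a `ℂ`-algebra to the Clifford
algebra of `ℂ^n` with the quadratic form `q(z) = -(z₁² + ⋯ + z_n²)`.
-/

noncomputable section

/-- The quadratic form `Q_m(x) = -(x, x)` on `ℝ^m`. -/
def Qneg (m : ℕ) : QuadraticForm ℝ (Fin m → ℝ) :=
  QuadraticMap.weightedSumSquares ℝ (fun _ : Fin m => (-1 : ℝ))

/-- The real Clifford algebra `Cl_m` of `Q_m`. -/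
abbrev Cl (m : ℕ) := CliffordAlgebra (Qneg m)

/-- The generator `e_i ∈ Cl_m`, the image of the `i`-th standard basis vector. -/
def eCl (m : ℕ) (i : Fin m) : Cl m := CliffordAlgebra.ι (Qneg m) (Pi.single i 1)

/-- `M_n`: the subgroup of the unit group of `Cl_{n+1}` generated by the elements
`e_i e_{i+1}`, `1 ≤ i ≤ n`. -/
def Mgrp (n : ℕ) : Subgroup (Cl (n + 1))ˣ :=
  Subgroup.closure {u : (Cl (n + 1))ˣ | ∃ i : Fin n,
    (u : Cl (n + 1)) = eCl (n + 1) i.castSucc * eCl (n + 1) i.succ}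

/-- The quadratic form `q(z) = -(z₁² + ⋯ + z_n²)` on `ℂ^n`. -/
def QnegC (n : ℕ) : QuadraticForm ℂ (Fin n → ℂ) :=
  QuadraticMap.weightedSumSquares ℂ (fun _ : Fin n => (-1 : ℂ))

theorem eCl_mul_self (m : ℕ) (i : Fin m) : eCl m i * eCl m i = -1 := by
  have hQ : Qneg m (Pi.single i 1) = -1 := by
    simp [Qneg, QuadraticMap.weightedSumSquares_apply, Pi.single_apply]
  rw [eCl, CliffordAlgebra.ι_sq_scalar, hQ, map_neg, map_one]

theorem eCl_mul_eCl_of_ne (m : ℕ) {i j : Fin m} (h : i ≠ j) :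
    eCl m i * eCl m j = -(eCl m j * eCl m i) := by
  apply CliffordAlgebra.ι_mul_ι_comm_of_isOrtho
  rw [QuadraticMap.isOrtho_def]
  simp only [Qneg, QuadraticMap.weightedSumSquares_apply, ← Finset.sum_add_distrib]
  refine Finset.sum_congr rfl fun k _ => ?_
  by_cases hi : k = i
  · simp [hi, h]
  · simp [hi]

/-- The unit `e_1 e_{j+1}` of `Cl_{n+1}`. -/
def firstMulUnit (n : ℕ) (j : Fin n) : (Cl (n + 1))ˣ where
  val := eCl (n + 1) 0 * eCl (n + 1) j.succ
  inv := eCl (n + 1) j.succ * eCl (n + 1) 0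
  val_inv := by
    rw [mul_assoc, ← mul_assoc (eCl _ j.succ), eCl_mul_self]
    simp [eCl_mul_self]
  inv_val := by
    rw [mul_assoc, ← mul_assoc (eCl _ 0), eCl_mul_self]
    simp [eCl_mul_self]

theorem coe_firstMulUnit (n : ℕ) (j : Fin n) :
    (firstMulUnit n j : Cl (n + 1)) = eCl (n + 1) 0 * eCl (n + 1) j.succ := rfl

theorem firstMulUnit_mul (n : ℕ) (i j : Fin n) :
    (firstMulUnit n i : Cl (n + 1)) * firstMulUnit n j =
      eCl (n + 1) i.succ * eCl (n + 1) j.succ := by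
  rw [coe_firstMulUnit, coe_firstMulUnit, eCl_mul_eCl_of_ne _ (Fin.succ_ne_zero i).symm, neg_mul,
    mul_assoc, ← mul_assoc (eCl _ 0), eCl_mul_self]
  simp

/-- `M_n` contains every `e_1 e_{j+1}`. -/
theorem firstMulUnit_mem (n : ℕ) (j : Fin n) :
    firstMulUnit n j ∈ Mgrp n := by
  obtain ⟨k, hk⟩ := j
  induction k with
  | zero => exact Subgroup.subset_closure ⟨⟨0, hk⟩, rfl⟩
  | succ k ih =>
    have hprev := ih (by omega)
    have hstep : (firstMulUnit n ⟨k, by omega⟩) * firstMulUnit n ⟨k + 1, hk⟩ ∈ Mgrp n :=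
      Subgroup.subset_closure ⟨⟨k + 1, hk⟩, firstMulUnit_mul n _ _⟩
    exact (Subgroup.mul_mem_cancel_left _ hprev).1 hstep

/-- The map `v ↦ ι (v_2, …, v_{n+1}) + c v_1`. -/
def vecAddScalar (n : ℕ) (c : ℝ) : (Fin (n + 1) → ℝ) →ₗ[ℝ] CliffordAlgebra (QnegC n) where
  toFun v := CliffordAlgebra.ι (QnegC n) (fun i => (v i.succ : ℂ)) + algebraMap ℝ _ (c * v 0)
  map_add' v w := by
    have : (fun i : Fin n => (((v + w) i.succ : ℝ) : ℂ)) =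
        (fun i => (v i.succ : ℂ)) + fun i => (w i.succ : ℂ) := by ext; simp
    rw [this, map_add, Pi.add_apply, mul_add, map_add]
    abel
  map_smul' r v := by
    have : (fun i : Fin n => (((r • v) i.succ : ℝ) : ℂ)) =
        (r : ℂ) • fun i => (v i.succ : ℂ) := by ext; simp
    rw [this, map_smul, RingHom.id_apply, smul_add, Pi.smul_apply, smul_eq_mul, mul_left_comm,
      map_mul, Algebra.smul_def r (algebraMap ℝ _ _), Complex.coe_smul]

theorem vecAddScalar_apply (n : ℕ) (c : ℝ) (v : Fin (n + 1) → ℝ) :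
    vecAddScalar n c v = CliffordAlgebra.ι (QnegC n) (fun i => (v i.succ : ℂ)) +
      algebraMap ℝ _ (c * v 0) := rfl

theorem vecAddScalar_mul (n : ℕ) {c : ℝ} (hc : c * c = 1) (v : Fin (n + 1) → ℝ) :
    vecAddScalar n c v * vecAddScalar n (-c) v = algebraMap ℝ _ (Qneg (n + 1) v) := by
  have hQ : QnegC n (fun i => (v i.succ : ℂ)) =
      algebraMap ℝ ℂ (Qneg (n + 1) v + v 0 * v 0) := by
    simp [QnegC, Qneg, QuadraticMap.weightedSumSquares_apply, Fin.sum_univ_succ]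
  rw [vecAddScalar_apply, vecAddScalar_apply, add_mul, mul_add, mul_add,
    CliffordAlgebra.ι_sq_scalar, hQ, ← IsScalarTower.algebraMap_apply, ← map_mul,
    Algebra.commutes (c * v 0)]
  have hs : c * v 0 * (-c * v 0) = -(v 0 * v 0) := by linear_combination (-(v 0 * v 0)) * hc
  rw [hs, add_add_add_comm]
  simp only [neg_mul, map_neg, map_add, mul_neg]
  abel

/-- The map `v w ↦ (ι v' + v_1) (ι w' - w_1)` describing `Cl_{n+1}^0 → Cl(ℂ^n)`. -/
def evenHomC (n : ℕ) : CliffordAlgebra.EvenHom (Qneg (n + 1)) (CliffordAlgebra (QnegC n)) where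
  bilin := (LinearMap.mul ℝ (CliffordAlgebra (QnegC n))).compl₁₂ (vecAddScalar n 1)
    (vecAddScalar n (-1))
  contract v := vecAddScalar_mul n (one_mul 1) v
  contract_mid u v w := by
    have h := vecAddScalar_mul n (c := -1) (by norm_num) v
    rw [neg_neg] at h
    simp only [LinearMap.compl₁₂_apply, LinearMap.mul_apply']
    rw [mul_assoc, ← mul_assoc (vecAddScalar n (-1) v), h, ← Algebra.smul_def, mul_smul_comm]

theorem eCl_mul_eCl_mem_even (m : ℕ) (i j : Fin m) :
    eCl m i * eCl m j ∈ CliffordAlgebra.even (Qneg m) :=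
  CliffordAlgebra.ι_mul_ι_mem_evenOdd_zero _ _ _

theorem Mgrp_le_even_units (n : ℕ) :
    Mgrp n ≤ (CliffordAlgebra.even (Qneg (n + 1))).toSubmonoid.units := by
  refine (Subgroup.closure_le _).2 ?_
  rintro u ⟨i, hu⟩
  refine ⟨?_, ?_⟩
  · show (u : Cl (n + 1)) ∈ CliffordAlgebra.even _
    rw [hu]
    exact eCl_mul_eCl_mem_even _ _ _
  · have hinv : (↑u⁻¹ : Cl (n + 1)) = eCl (n + 1) i.succ * eCl (n + 1) i.castSucc := by
      rw [Units.inv_eq_of_mul_eq_one_right]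
      rw [hu, mul_assoc, ← mul_assoc (eCl _ i.succ), eCl_mul_self]
      simp [eCl_mul_self]
    show (↑u⁻¹ : Cl (n + 1)) ∈ CliffordAlgebra.even _
    rw [hinv]
    exact eCl_mul_eCl_mem_even _ _ _

/-- The homomorphism from `M_n` to the Clifford algebra of `ℂ^n`. -/
def MgrpHom (n : ℕ) : ↥(Mgrp n) →* CliffordAlgebra (QnegC n) where
  toFun u := CliffordAlgebra.even.lift (Qneg (n + 1)) (evenHomC n)
    ⟨((u : (Cl (n + 1))ˣ) : Cl (n + 1)), (Mgrp_le_even_units n u.2).1⟩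
  map_one' := map_one (CliffordAlgebra.even.lift (Qneg (n + 1)) (evenHomC n))
  map_mul' _ _ := map_mul (CliffordAlgebra.even.lift (Qneg (n + 1)) (evenHomC n)) ⟨_, _⟩ ⟨_, _⟩

theorem MgrpHom_of_eq_neg_one (n : ℕ) (η : ↥(Mgrp n))
    (hη : ((η : (Cl (n + 1))ˣ) : Cl (n + 1)) = -1) : MgrpHom n η = -1 := by
  have : (⟨_, (Mgrp_le_even_units n η.2).1⟩ : CliffordAlgebra.even (Qneg (n + 1))) = -1 :=
    Subtype.ext hη
  refine (congrArg (CliffordAlgebra.even.lift (Qneg (n + 1)) (evenHomC n)) this).trans ?_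
  rw [map_neg, map_one]

theorem MgrpHom_firstMulUnit (n : ℕ) (j : Fin n) (hj : firstMulUnit n j ∈ Mgrp n) :
    MgrpHom n ⟨firstMulUnit n j, hj⟩ = CliffordAlgebra.ι (QnegC n) (Pi.single j 1) := by
  refine (CliffordAlgebra.even.lift_ι (Qneg (n + 1)) (evenHomC n) (Pi.single 0 1)
    (Pi.single j.succ 1)).trans ?_
  have h0 : (fun i : Fin n => ((Pi.single (0 : Fin (n + 1)) (1 : ℝ) : Fin (n + 1) → ℝ) i.succ : ℂ))
      = 0 := by ext; simp
  have h1 : (fun i : Fin n => ((Pi.single j.succ (1 : ℝ) : Fin (n + 1) → ℝ) i.succ : ℂ))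
      = Pi.single j 1 := by
    ext i; by_cases h : i = j <;> simp [h]
  simp only [evenHomC, LinearMap.compl₁₂_apply, LinearMap.mul_apply', vecAddScalar_apply, h0, h1]
  simp

/-- Squares of linear combinations of anticommuting square roots of `-1`. -/
theorem sum_smul_mul_self_of_anticommute {R A ι : Type*} [CommRing R] [Ring A] [Algebra R A]
    (a : ι → A) (hsq : ∀ i, a i * a i = -1) (hanti : ∀ i j, i ≠ j → a i * a j = -(a j * a i))
    (z : ι → R) (s : Finset ι) :
    (∑ i ∈ s, z i • a i) * (∑ i ∈ s, z i • a i) = algebraMap R A (∑ i ∈ s, -(z i * z i)) := by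
  classical
  induction s using Finset.induction_on with
  | empty => simp
  | insert k s hk ih =>
    have hcross : z k • a k * ∑ i ∈ s, z i • a i = -((∑ i ∈ s, z i • a i) * z k • a k) := by
      rw [Finset.mul_sum, Finset.sum_mul, ← Finset.sum_neg_distrib]
      refine Finset.sum_congr rfl fun i hi => ?_
      rw [smul_mul_smul_comm, smul_mul_smul_comm, hanti k i (fun h => hk (h ▸ hi)), smul_neg,
        mul_comm]
    rw [Finset.sum_insert hk, Finset.sum_insert hk, add_mul, mul_add, mul_add, ih, hcross,
      smul_mul_smul_comm, hsq, map_add, map_neg, Algebra.algebraMap_eq_smul_one (z k * z k),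
      smul_neg]
    abel

/-- Anticommuting square roots of `-1` in a complex algebra induce a map out of the Clifford
algebra of `ℂ^n`. -/
def cliffordLiftOfAnticommute {A : Type*} [Ring A] [Algebra ℂ A] {n : ℕ} (a : Fin n → A)
    (hsq : ∀ i, a i * a i = -1) (hanti : ∀ i j, i ≠ j → a i * a j = -(a j * a i)) :
    CliffordAlgebra (QnegC n) →ₐ[ℂ] A :=
  CliffordAlgebra.lift (QnegC n) ⟨Fintype.linearCombination ℂ a, fun z => by
    rw [Fintype.linearCombination_apply, sum_smul_mul_self_of_anticommute a hsq hanti]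
    simp [QnegC, QuadraticMap.weightedSumSquares_apply]⟩

theorem cliffordLiftOfAnticommute_ι_single {A : Type*} [Ring A] [Algebra ℂ A] {n : ℕ}
    (a : Fin n → A) (hsq : ∀ i, a i * a i = -1)
    (hanti : ∀ i j, i ≠ j → a i * a j = -(a j * a i)) (j : Fin n) :
    cliffordLiftOfAnticommute a hsq hanti (CliffordAlgebra.ι (QnegC n) (Pi.single j 1)) = a j := by
  rw [cliffordLiftOfAnticommute, CliffordAlgebra.lift_ι_apply,
    Fintype.linearCombination_apply_single, one_smul]

/-- Homomorphisms out of `M_n` are determined by their values on the `e_1 e_{j+1}`. -/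
theorem MgrpHom_ext {n : ℕ} {A : Type*} [Monoid A] {f g : ↥(Mgrp n) →* A}
    (hfg : ∀ j, f ⟨firstMulUnit n j, firstMulUnit_mem n j⟩ = g ⟨firstMulUnit n j, firstMulUnit_mem n j⟩) : f = g := by
  suffices h : Mgrp n ≤ (f.eqLocus g).map (Mgrp n).subtype by
    ext u
    obtain ⟨v, hv, hvu⟩ := h u.2
    exact Subtype.ext hvu ▸ hv
  refine (Subgroup.closure_le _).2 ?_
  rintro u ⟨⟨k, hk⟩, hu⟩
  cases k with
  | zero => exact ⟨⟨firstMulUnit n ⟨0, hk⟩, firstMulUnit_mem n _⟩, hfg _, Units.ext hu.symm⟩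
  | succ k =>
    refine ⟨⟨firstMulUnit n ⟨k, by omega⟩, firstMulUnit_mem n _⟩ *
      ⟨firstMulUnit n ⟨k + 1, hk⟩, firstMulUnit_mem n _⟩,
      mul_mem (S := Subgroup _) (hfg _) (hfg _), Units.ext ?_⟩
    exact (firstMulUnit_mul n _ _).trans hu.symm

theorem groupAlgebra_quotient_iso_clifford (n : ℕ) (hn : 1 ≤ n)
    (η : ↥(Mgrp n)) (hη : ((η : (Cl (n + 1))ˣ) : Cl (n + 1)) = -1) :
    Nonempty
      ((RingQuot (fun a b : MonoidAlgebra ℂ ↥(Mgrp n) =>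
          a = MonoidAlgebra.of ℂ ↥(Mgrp n) η + 1 ∧ b = 0))
        ≃ₐ[ℂ] CliffordAlgebra (QnegC n)) := by
  set r := fun a b : MonoidAlgebra ℂ ↥(Mgrp n) =>
    a = MonoidAlgebra.of ℂ ↥(Mgrp n) η + 1 ∧ b = 0
  let π : ↥(Mgrp n) →* RingQuot r :=
    (RingQuot.mkAlgHom ℂ r : MonoidAlgebra ℂ ↥(Mgrp n) →* RingQuot r).comp
      (MonoidAlgebra.of ℂ ↥(Mgrp n))
  have hπη : π η = -1 := by
    have h := RingQuot.mkAlgHom_rel ℂ (s := r) ⟨rfl, rfl⟩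
    rw [map_add, map_one, map_zero] at h
    exact eq_neg_of_add_eq_zero_left h
  let g : Fin n → ↥(Mgrp n) := fun j => ⟨firstMulUnit n j, firstMulUnit_mem n j⟩
  have hsq : ∀ i, π (g i) * π (g i) = -1 := fun i => by
    have h : g i * g i = η := by
      refine Subtype.ext (Units.ext ?_)
      rw [hη]
      exact (firstMulUnit_mul n i i).trans (eCl_mul_self _ _)
    rw [← map_mul, h, hπη]
  have hanti : ∀ i j, i ≠ j → π (g i) * π (g j) = -(π (g j) * π (g i)) := fun i j hij => by
    have h : g i * g j = η * (g j * g i) := by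
      refine Subtype.ext (Units.ext ?_)
      refine (firstMulUnit_mul n i j).trans ?_
      rw [eCl_mul_eCl_of_ne _ (fun h => hij (Fin.succ_injective _ h)), ← firstMulUnit_mul]
      simp [hη, g]
    rw [← map_mul, h, map_mul, hπη, map_mul]
    exact neg_one_mul (π (g j) * π (g i))
  have hrel : ∀ ⦃x y⦄, r x y → MonoidAlgebra.lift ℂ (CliffordAlgebra (QnegC n)) _ (MgrpHom n) x =
      MonoidAlgebra.lift ℂ (CliffordAlgebra (QnegC n)) _ (MgrpHom n) y := by
    rintro _ _ ⟨rfl, rfl⟩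
    rw [map_add, map_one, map_zero, MonoidAlgebra.lift_of, MgrpHom_of_eq_neg_one n η hη,
      neg_add_cancel]
  let F : RingQuot r →ₐ[ℂ] CliffordAlgebra (QnegC n) := RingQuot.liftAlgHom ℂ ⟨_, hrel⟩
  have hF : ∀ u, F (π u) = MgrpHom n u := fun u =>
    (RingQuot.liftAlgHom_mkAlgHom_apply ℂ _ hrel _).trans (MonoidAlgebra.lift_of _ _)
  let G := cliffordLiftOfAnticommute (fun j => π (g j)) hsq hanti
  refine ⟨AlgEquiv.ofAlgHom F G ?_ ?_⟩
  · refine CliffordAlgebra.hom_ext (LinearMap.pi_ext' fun j => LinearMap.ext_ring ?_)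
    change F (G (CliffordAlgebra.ι (QnegC n) (Pi.single j 1))) =
      CliffordAlgebra.ι (QnegC n) (Pi.single j 1)
    rw [cliffordLiftOfAnticommute_ι_single, hF, MgrpHom_firstMulUnit]
  · refine RingQuot.ringQuot_ext' ℂ _ _
      (MonoidAlgebra.algHom_ext' (MgrpHom_ext fun j => ?_) (Subsingleton.elim _ _))
    change G (F (π (g j))) = π (g j)
    rw [hF, MgrpHom_firstMulUnit, cliffordLiftOfAnticommute_ι_single]
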